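/- Let φ(x) be a formula of the correspondence language that is invariant with respect to (2,2)-modal asimulations. Then φ(x) is logically equivalent to the (2,2)-standard x-translation of some modal intuitionistic formula. -/

import Mathlib

namespace ModalIntAsim

/-- Binary relation symbols of the correspondence vocabulary: R, R_□, R_◇. -/
inductive RelSym : Type
  | r | box | diam
deriving DecidableEq

/-- Formulas of the correspondence language: classical first-order logic without
identity, with variables indexed by `ℕ`, unary predicate letters `P n` (n : ℕ),
and the three binary relation symbols. -/
inductive FOForm : Type
  | falsum : FOForm
  | pred : ℕ → ℕ → FOForm            -- `pred n v` is `P_n(x_v)`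
  | rel : RelSym → ℕ → ℕ → FOForm    -- `rel s v w` is `S(x_v, x_w)`
  | conj : FOForm → FOForm → FOForm
  | disj : FOForm → FOForm → FOForm
  | impl : FOForm → FOForm → FOForm
  | all : ℕ → FOForm → FOForm
  | ex : ℕ → FOForm → FOForm

namespace FOForm

/-- Free variables of a correspondence formula. -/
def freeVars : FOForm → Finset ℕ
  | falsum => ∅
  | pred _ v => {v}
  | rel _ v w => {v, w}
  | conj f g => f.freeVars ∪ g.freeVars
  | disj f g => f.freeVars ∪ g.freeVars
  | impl f g => f.freeVars ∪ g.freeVars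
  | all v f => f.freeVars \ {v}
  | ex v f => f.freeVars \ {v}

/-- The unary predicate letters occurring in a formula (the binary relation
symbols R, R_□, R_◇ are regarded as belonging to every vocabulary Σ_φ). -/
def predLetters : FOForm → Finset ℕ
  | falsum => ∅
  | pred n _ => {n}
  | rel _ _ _ => ∅
  | conj f g => f.predLetters ∪ g.predLetters
  | disj f g => f.predLetters ∪ g.predLetters
  | impl f g => f.predLetters ∪ g.predLetters
  | all _ f => f.predLetters
  | ex _ f => f.predLetters

/-- Degree of a formula: the greatest number of nested quantifiers. -/
def degree : FOForm → ℕ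
  | falsum => 0
  | pred _ _ => 0
  | rel _ _ _ => 0
  | conj f g => max f.degree g.degree
  | disj f g => max f.degree g.degree
  | impl f g => max f.degree g.degree
  | all _ f => f.degree + 1
  | ex _ f => f.degree + 1

end FOForm

/-- A model of the correspondence language: a domain together with
interpretations of R, R_□, R_◇ and of the unary predicate letters.
(A Θ-model only consults the letters in Θ.) -/
structure Model : Type 1 where
  U : Type
  rel : U → U → Prop
  relBox : U → U → Prop
  relDiam : U → U → Prop
  pred : ℕ → U → Prop

/-- Interpretation of a binary relation symbol in a model. -/
def Model.relOf (M : Model) : RelSym → M.U → M.U → Prop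
  | .r => M.rel
  | .box => M.relBox
  | .diam => M.relDiam

/-- Tarskian satisfaction of a formula in a model under an assignment. -/
def Sat (M : Model) : FOForm → (ℕ → M.U) → Prop
  | .falsum, _ => False
  | .pred n v, α => M.pred n (α v)
  | .rel s v w, α => M.relOf s (α v) (α w)
  | .conj f g, α => Sat M f α ∧ Sat M g α
  | .disj f g, α => Sat M f α ∨ Sat M g α
  | .impl f g, α => Sat M f α → Sat M g α
  | .all v f, α => ∀ u : M.U, Sat M f (Function.update α v u)
  | .ex v f, α => ∃ u : M.U, Sat M f (Function.update α v u)

/-- `M, a ⊨ φ(x)`: φ is true in `M` under any assignment sending `x` to `a`. -/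
def SatAt (M : Model) (a : M.U) (x : ℕ) (φ : FOForm) : Prop :=
  ∀ α : ℕ → M.U, α x = a → Sat M φ α

/-- Logical equivalence of correspondence formulas. -/
def Equiv (φ ψ : FOForm) : Prop :=
  ∀ (M : Model) (α : ℕ → M.U), Sat M φ α ↔ Sat M ψ α

/-- Logical entailment between correspondence formulas. -/
def Entails (φ ψ : FOForm) : Prop :=
  ∀ (M : Model) (α : ℕ → M.U), Sat M φ α → Sat M ψ α

/-- Modal intuitionistic formulas: built from propositional letters `p n`
using ⊥, ∧, ∨, →, □, ◇. -/
inductive MForm : Type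
  | bot : MForm
  | prop : ℕ → MForm
  | conj : MForm → MForm → MForm
  | disj : MForm → MForm → MForm
  | impl : MForm → MForm → MForm
  | box : MForm → MForm
  | diam : MForm → MForm

/-- The (i,j)-standard x-translation `ST_ij`.  `boxOne = true` means the box
clause (□₁) is used (i = 1), `boxOne = false` means (□₂) (i = 2); likewise
`diamOne = true` means the diamond clause (◇₁) (j = 1) and `diamOne = false`
means (◇₂) (j = 2).  Bound variables are chosen fresh as `x+1`, `x+2`. -/
def ST (boxOne diamOne : Bool) : MForm → ℕ → FOForm
  | .bot, _ => .falsum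
  | .prop n, x => .pred n x
  | .conj I J, x => .conj (ST boxOne diamOne I x) (ST boxOne diamOne J x)
  | .disj I J, x => .disj (ST boxOne diamOne I x) (ST boxOne diamOne J x)
  | .impl I J, x =>
      .all (x + 1) (.impl (.rel .r x (x + 1))
        (.impl (ST boxOne diamOne I (x + 1)) (ST boxOne diamOne J (x + 1))))
  | .box I, x =>
      if boxOne then
        .all (x + 1) (.impl (.rel .box x (x + 1)) (ST boxOne diamOne I (x + 1)))
      else
        .all (x + 1) (.impl (.rel .r x (x + 1))
          (.all (x + 2) (.impl (.rel .box (x + 1) (x + 2)) (ST boxOne diamOne I (x + 2)))))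
  | .diam I, x =>
      if diamOne then
        .ex (x + 1) (.conj (.rel .diam x (x + 1)) (ST boxOne diamOne I (x + 1)))
      else
        .all (x + 1) (.impl (.rel .r x (x + 1))
          (.ex (x + 2) (.conj (.rel .diam (x + 1) (x + 2)) (ST boxOne diamOne I (x + 2)))))

/-! ### Conditions on relations between tuples (the k-asimulation conditions).
A relation between the two models is represented by its two directed
components; `N` is the model of the source tuple and `P` that of the target
tuple.  A tuple `(ā_m, a)` is represented as the list `as ++ [a]`, with
`m = as.length`. -/

section TupleConds

variable (N P : Model)

/-- The "p-type" condition: related tuples are nonempty and of equal length. -/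
def TypeCond (A : List N.U → List P.U → Prop) : Prop :=
  ∀ as bs, A as bs → as ≠ [] ∧ as.length = bs.length

/-- (p-base). -/
def BaseCond (Θ : Set ℕ) (A : List N.U → List P.U → Prop) : Prop :=
  ∀ (as : List N.U) (bs : List P.U) (a : N.U) (b : P.U),
    A (as ++ [a]) (bs ++ [b]) → ∀ n ∈ Θ, N.pred n a → P.pred n b

/-- (p-step). -/
def StepCond (k : ℕ) (A : List N.U → List P.U → Prop)
    (Arev : List P.U → List N.U → Prop) : Prop :=
  ∀ (as : List N.U) (bs : List P.U) (a : N.U) (b d : P.U),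
    A (as ++ [a]) (bs ++ [b]) → P.rel b d → as.length < k →
    ∃ c : N.U, N.rel a c ∧ A (as ++ [a, c]) (bs ++ [b, d]) ∧
      Arev (bs ++ [b, d]) (as ++ [a, c])

/-- (p-box-1). -/
def Box1Cond (k : ℕ) (A : List N.U → List P.U → Prop) : Prop :=
  ∀ (as : List N.U) (bs : List P.U) (a : N.U) (b d : P.U),
    A (as ++ [a]) (bs ++ [b]) → P.relBox b d → as.length < k →
    ∃ c : N.U, N.relBox a c ∧ A (as ++ [a, c]) (bs ++ [b, d])

/-- (p-box-2). -/
def Box2Cond (k : ℕ) (A : List N.U → List P.U → Prop) : Prop :=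
  ∀ (as : List N.U) (bs : List P.U) (a : N.U) (b d f : P.U),
    A (as ++ [a]) (bs ++ [b]) → P.rel b d → P.relBox d f → as.length + 1 < k →
    ∃ c e : N.U, N.rel a c ∧ N.relBox c e ∧ A (as ++ [a, c, e]) (bs ++ [b, d, f])

/-- (p-diam-1). -/
def Diam1Cond (k : ℕ) (A : List N.U → List P.U → Prop) : Prop :=
  ∀ (as : List N.U) (bs : List P.U) (a c : N.U) (b : P.U),
    A (as ++ [a]) (bs ++ [b]) → N.relDiam a c → as.length < k →
    ∃ d : P.U, P.relDiam b d ∧ A (as ++ [a, c]) (bs ++ [b, d])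

/-- (p-diam-2(1)). -/
def Diam2aCond (k : ℕ) (A B : List N.U → List P.U → Prop) : Prop :=
  ∀ (as : List N.U) (bs : List P.U) (a : N.U) (b d : P.U),
    A (as ++ [a]) (bs ++ [b]) → P.rel b d → as.length + 1 < k →
    ∃ c : N.U, N.rel a c ∧ B (as ++ [a, c]) (bs ++ [b, d])

/-- (p-diam-2(2)). -/
def Diam2bCond (k : ℕ) (B A : List N.U → List P.U → Prop) : Prop :=
  ∀ (as : List N.U) (bs : List P.U) (a c : N.U) (b : P.U),
    B (as ++ [a]) (bs ++ [b]) → N.relDiam a c → as.length < k →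
    ∃ d : P.U, P.relDiam b d ∧ A (as ++ [a, c]) (bs ++ [b, d])

end TupleConds

/-- An (i,1)-modal ⟨(M₁,t),(M₂,u)⟩_k-asimulation (j = 1): a single relation `A`
given by its two directed components `A12`, `A21`. -/
def IsKAsimD1 (boxOne : Bool) (Θ : Set ℕ) (M₁ M₂ : Model) (t : M₁.U) (u : M₂.U) (k : ℕ)
    (A12 : List M₁.U → List M₂.U → Prop) (A21 : List M₂.U → List M₁.U → Prop) : Prop :=
  TypeCond M₁ M₂ A12 ∧ TypeCond M₂ M₁ A21 ∧
  A12 [t] [u] ∧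
  BaseCond M₁ M₂ Θ A12 ∧ BaseCond M₂ M₁ Θ A21 ∧
  StepCond M₁ M₂ k A12 A21 ∧ StepCond M₂ M₁ k A21 A12 ∧
  (if boxOne then Box1Cond M₁ M₂ k A12 ∧ Box1Cond M₂ M₁ k A21
   else Box2Cond M₁ M₂ k A12 ∧ Box2Cond M₂ M₁ k A21) ∧
  Diam1Cond M₁ M₂ k A12 ∧ Diam1Cond M₂ M₁ k A21

/-- An (i,2)-modal ⟨(M₁,t),(M₂,u)⟩_k-asimulation (j = 2): an ordered pair
(A, B) of relations, each given by its two directed components. -/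
def IsKAsimD2 (boxOne : Bool) (Θ : Set ℕ) (M₁ M₂ : Model) (t : M₁.U) (u : M₂.U) (k : ℕ)
    (A12 : List M₁.U → List M₂.U → Prop) (A21 : List M₂.U → List M₁.U → Prop)
    (B12 : List M₁.U → List M₂.U → Prop) (B21 : List M₂.U → List M₁.U → Prop) : Prop :=
  TypeCond M₁ M₂ A12 ∧ TypeCond M₂ M₁ A21 ∧
  TypeCond M₁ M₂ B12 ∧ TypeCond M₂ M₁ B21 ∧
  A12 [t] [u] ∧
  BaseCond M₁ M₂ Θ A12 ∧ BaseCond M₂ M₁ Θ A21 ∧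
  StepCond M₁ M₂ k A12 A21 ∧ StepCond M₂ M₁ k A21 A12 ∧
  (if boxOne then Box1Cond M₁ M₂ k A12 ∧ Box1Cond M₂ M₁ k A21
   else Box2Cond M₁ M₂ k A12 ∧ Box2Cond M₂ M₁ k A21) ∧
  Diam2aCond M₁ M₂ k A12 B12 ∧ Diam2aCond M₂ M₁ k A21 B21 ∧
  Diam2bCond M₁ M₂ k B12 A12 ∧ Diam2bCond M₂ M₁ k B21 A21

/-- φ(x) is invariant with respect to (i,1)-modal k-asimulations. -/
def KInvariantD1 (boxOne : Bool) (x : ℕ) (φ : FOForm) (k : ℕ) : Prop :=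
  ∀ Θ : Set ℕ, (φ.predLetters : Set ℕ) ⊆ Θ →
  ∀ (M₁ M₂ : Model) (t : M₁.U) (u : M₂.U)
    (A12 : List M₁.U → List M₂.U → Prop) (A21 : List M₂.U → List M₁.U → Prop),
    IsKAsimD1 boxOne Θ M₁ M₂ t u k A12 A21 →
    ∀ (a : M₁.U) (b : M₂.U), A12 [a] [b] → SatAt M₁ a x φ → SatAt M₂ b x φ

/-- φ(x) is invariant with respect to (i,2)-modal k-asimulations. -/
def KInvariantD2 (boxOne : Bool) (x : ℕ) (φ : FOForm) (k : ℕ) : Prop :=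
  ∀ Θ : Set ℕ, (φ.predLetters : Set ℕ) ⊆ Θ →
  ∀ (M₁ M₂ : Model) (t : M₁.U) (u : M₂.U)
    (A12 : List M₁.U → List M₂.U → Prop) (A21 : List M₂.U → List M₁.U → Prop)
    (B12 : List M₁.U → List M₂.U → Prop) (B21 : List M₂.U → List M₁.U → Prop),
    IsKAsimD2 boxOne Θ M₁ M₂ t u k A12 A21 B12 B21 →
    ∀ (a : M₁.U) (b : M₂.U), A12 [a] [b] → SatAt M₁ a x φ → SatAt M₂ b x φ

/-! ### Conditions for asimulations *simpliciter* (relations between elements). -/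

section ElemConds

variable (N P : Model)

/-- (base). -/
def BaseCondE (Θ : Set ℕ) (A : N.U → P.U → Prop) : Prop :=
  ∀ (a : N.U) (b : P.U), A a b → ∀ n ∈ Θ, N.pred n a → P.pred n b

/-- (step). -/
def StepCondE (A : N.U → P.U → Prop) (Arev : P.U → N.U → Prop) : Prop :=
  ∀ (a : N.U) (b d : P.U), A a b → P.rel b d →
    ∃ c : N.U, N.rel a c ∧ A c d ∧ Arev d c

/-- (box-1). -/
def Box1CondE (A : N.U → P.U → Prop) : Prop :=
  ∀ (a : N.U) (b d : P.U), A a b → P.relBox b d →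
    ∃ c : N.U, N.relBox a c ∧ A c d

/-- (box-2). -/
def Box2CondE (A : N.U → P.U → Prop) : Prop :=
  ∀ (a : N.U) (b d f : P.U), A a b → P.rel b d → P.relBox d f →
    ∃ c e : N.U, N.rel a c ∧ N.relBox c e ∧ A e f

/-- (diam-1). -/
def Diam1CondE (A : N.U → P.U → Prop) : Prop :=
  ∀ (a c : N.U) (b : P.U), A a b → N.relDiam a c →
    ∃ d : P.U, P.relDiam b d ∧ A c d

/-- (diam-2(1)). -/
def Diam2aCondE (A B : N.U → P.U → Prop) : Prop :=
  ∀ (a : N.U) (b d : P.U), A a b → P.rel b d →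
    ∃ c : N.U, N.rel a c ∧ B c d

/-- (diam-2(2)). -/
def Diam2bCondE (B A : N.U → P.U → Prop) : Prop :=
  ∀ (a c : N.U) (b : P.U), B a b → N.relDiam a c →
    ∃ d : P.U, P.relDiam b d ∧ A c d

end ElemConds

/-- An (i,1)-modal ⟨(M₁,t),(M₂,u)⟩-asimulation (j = 1). -/
def IsAsimD1 (boxOne : Bool) (Θ : Set ℕ) (M₁ M₂ : Model) (t : M₁.U) (u : M₂.U)
    (A12 : M₁.U → M₂.U → Prop) (A21 : M₂.U → M₁.U → Prop) : Prop :=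
  A12 t u ∧
  BaseCondE M₁ M₂ Θ A12 ∧ BaseCondE M₂ M₁ Θ A21 ∧
  StepCondE M₁ M₂ A12 A21 ∧ StepCondE M₂ M₁ A21 A12 ∧
  (if boxOne then Box1CondE M₁ M₂ A12 ∧ Box1CondE M₂ M₁ A21
   else Box2CondE M₁ M₂ A12 ∧ Box2CondE M₂ M₁ A21) ∧
  Diam1CondE M₁ M₂ A12 ∧ Diam1CondE M₂ M₁ A21

/-- An (i,2)-modal ⟨(M₁,t),(M₂,u)⟩-asimulation (j = 2). -/
def IsAsimD2 (boxOne : Bool) (Θ : Set ℕ) (M₁ M₂ : Model) (t : M₁.U) (u : M₂.U)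
    (A12 : M₁.U → M₂.U → Prop) (A21 : M₂.U → M₁.U → Prop)
    (B12 : M₁.U → M₂.U → Prop) (B21 : M₂.U → M₁.U → Prop) : Prop :=
  A12 t u ∧
  BaseCondE M₁ M₂ Θ A12 ∧ BaseCondE M₂ M₁ Θ A21 ∧
  StepCondE M₁ M₂ A12 A21 ∧ StepCondE M₂ M₁ A21 A12 ∧
  (if boxOne then Box1CondE M₁ M₂ A12 ∧ Box1CondE M₂ M₁ A21
   else Box2CondE M₁ M₂ A12 ∧ Box2CondE M₂ M₁ A21) ∧
  Diam2aCondE M₁ M₂ A12 B12 ∧ Diam2aCondE M₂ M₁ A21 B21 ∧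
  Diam2bCondE M₁ M₂ B12 A12 ∧ Diam2bCondE M₂ M₁ B21 A21

/-- φ(x) is invariant with respect to (i,1)-modal asimulations. -/
def InvariantD1 (boxOne : Bool) (x : ℕ) (φ : FOForm) : Prop :=
  ∀ Θ : Set ℕ, (φ.predLetters : Set ℕ) ⊆ Θ →
  ∀ (M₁ M₂ : Model) (t : M₁.U) (u : M₂.U)
    (A12 : M₁.U → M₂.U → Prop) (A21 : M₂.U → M₁.U → Prop),
    IsAsimD1 boxOne Θ M₁ M₂ t u A12 A21 →
    ∀ (a : M₁.U) (b : M₂.U), A12 a b → SatAt M₁ a x φ → SatAt M₂ b x φ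

/-- φ(x) is invariant with respect to (i,2)-modal asimulations. -/
def InvariantD2 (boxOne : Bool) (x : ℕ) (φ : FOForm) : Prop :=
  ∀ Θ : Set ℕ, (φ.predLetters : Set ℕ) ⊆ Θ →
  ∀ (M₁ M₂ : Model) (t : M₁.U) (u : M₂.U)
    (A12 : M₁.U → M₂.U → Prop) (A21 : M₂.U → M₁.U → Prop)
    (B12 : M₁.U → M₂.U → Prop) (B21 : M₂.U → M₁.U → Prop),
    IsAsimD2 boxOne Θ M₁ M₂ t u A12 A21 B12 B21 →
    ∀ (a : M₁.U) (b : M₂.U), A12 a b → SatAt M₁ a x φ → SatAt M₂ b x φ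

/-! ### Types, complete conjunctions, ω-saturation. -/

/-- `int(φ,x,l)`: the set of (2,2)-standard x-translations of modal
intuitionistic formulas which are (Σ_φ,x,l)-formulas. -/
def intSet (φ : FOForm) (x l : ℕ) : Set FOForm :=
  {ψ | (∃ I : MForm, ψ = ST false false I x) ∧
    ψ.predLetters ⊆ φ.predLetters ∧ ψ.freeVars ⊆ {x} ∧ ψ.degree ≤ l}

/-- `tp_l(φ(x),M,a)`. -/
def tpSet (φ : FOForm) (x l : ℕ) (M : Model) (a : M.U) : Set FOForm :=
  {ψ | ψ ∈ intSet φ x l ∧ SatAt M a x ψ}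

/-- Conjunction of a nonempty list of formulas. -/
def listConj : FOForm → List FOForm → FOForm
  | ψ, [] => ψ
  | ψ, χ :: L => FOForm.conj ψ (listConj χ L)

/-- Ψ(x) is a complete (φ,x,k)-conjunction. -/
def IsCompleteConj (φ : FOForm) (x k : ℕ) (Ψ : FOForm) : Prop :=
  (∃ (ψ₀ : FOForm) (L : List FOForm), ψ₀ ∈ intSet φ x k ∧
    (∀ χ ∈ L, χ ∈ intSet φ x k) ∧ Ψ = listConj ψ₀ L) ∧
  ∃ (M : Model) (a : M.U), SatAt M a x (FOForm.conj Ψ φ) ∧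
    ∀ ψ ∈ tpSet φ x k M a, Entails Ψ ψ

/-- `int_x(Θ)` for the (i,j)-standard translation. -/
def intX (Θ : Set ℕ) (boxOne diamOne : Bool) (x : ℕ) : Set FOForm :=
  {ψ | (∃ I : MForm, ψ = ST boxOne diamOne I x) ∧ (ψ.predLetters : Set ℕ) ⊆ Θ}

/-- `tp_x(M,t)` for the (i,j)-standard translation. -/
def tpX (Θ : Set ℕ) (boxOne diamOne : Bool) (x : ℕ) (M : Model) (t : M.U) : Set FOForm :=
  {ψ | ψ ∈ intX Θ boxOne diamOne x ∧ SatAt M t x ψ}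

/-- `imp_x(M,t) = ⋂ { t̄p_x(M,u) : t R_◇ u }` (for the (2,2)-translation). -/
def impX (Θ : Set ℕ) (x : ℕ) (M : Model) (t : M.U) : Set FOForm :=
  {ψ | ψ ∈ intX Θ false false x ∧ ∀ u : M.U, M.relDiam t u → ¬ SatAt M u x ψ}

/-- ω-saturation: for every finite tuple of parameters (the first `n` values of
an assignment `α`) and every set `Γ` of formulas with finitely many free
variables beyond the parameters, if `Γ` is consistent with the first-order
theory of `[M,ā]` (i.e. satisfiable together with it in some model), then `Γ`
is realized in `[M,ā]`. -/
def OmegaSaturated (M : Model) : Prop :=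
  ∀ (n : ℕ) (α : ℕ → M.U) (Γ : Set FOForm),
    (∃ k : ℕ, ∀ γ ∈ Γ, γ.freeVars ⊆ Finset.range (n + k)) →
    (∃ (N : Model) (β : ℕ → N.U),
      (∀ ψ : FOForm, ψ.freeVars ⊆ Finset.range n → Sat M ψ α → Sat N ψ β) ∧
      ∀ γ ∈ Γ, Sat N γ β) →
    ∃ α' : ℕ → M.U, (∀ i < n, α' i = α i) ∧ ∀ γ ∈ Γ, Sat M γ α'

/-! ### Relativization to a class κ of models. -/

/-- κ(Θ) is first-order axiomatizable for every finite Θ (with R ∈ Θ): for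
every finite set `S` of unary predicate letters there is a set of Θ-sentences
axiomatizing membership in κ. -/
def FinAxiomatizable (κ : Set Model) : Prop :=
  ∀ S : Finset ℕ, ∃ Ax : Set FOForm,
    (∀ ψ ∈ Ax, ψ.freeVars = ∅ ∧ (ψ.predLetters : Set ℕ) ⊆ (S : Set ℕ)) ∧
    ∀ M : Model, M ∈ κ ↔ ∀ ψ ∈ Ax, ∀ α : ℕ → M.U, Sat M ψ α

/-- φ κ-follows from ψ: {ψ, ¬φ} is not κ-satisfiable. -/
def KappaFollows (κ : Set Model) (ψ φ : FOForm) : Prop :=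
  ¬ ∃ M : Model, M ∈ κ ∧ ∃ α : ℕ → M.U, Sat M ψ α ∧ ¬ Sat M φ α

/-- κ-equivalence of formulas. -/
def KappaEquiv (κ : Set Model) (φ ψ : FOForm) : Prop :=
  KappaFollows κ φ ψ ∧ KappaFollows κ ψ φ

/-- φ(x) is κ-invariant with respect to (i,1)-modal asimulations. -/
def KappaInvariantD1 (κ : Set Model) (boxOne : Bool) (x : ℕ) (φ : FOForm) : Prop :=
  ∀ Θ : Set ℕ, (φ.predLetters : Set ℕ) ⊆ Θ →
  ∀ (M₁ M₂ : Model), M₁ ∈ κ → M₂ ∈ κ →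
  ∀ (t : M₁.U) (u : M₂.U)
    (A12 : M₁.U → M₂.U → Prop) (A21 : M₂.U → M₁.U → Prop),
    IsAsimD1 boxOne Θ M₁ M₂ t u A12 A21 →
    ∀ (a : M₁.U) (b : M₂.U), A12 a b → SatAt M₁ a x φ → SatAt M₂ b x φ

/-- φ(x) is κ-invariant with respect to (i,2)-modal asimulations. -/
def KappaInvariantD2 (κ : Set Model) (boxOne : Bool) (x : ℕ) (φ : FOForm) : Prop :=
  ∀ Θ : Set ℕ, (φ.predLetters : Set ℕ) ⊆ Θ →
  ∀ (M₁ M₂ : Model), M₁ ∈ κ → M₂ ∈ κ →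
  ∀ (t : M₁.U) (u : M₂.U)
    (A12 : M₁.U → M₂.U → Prop) (A21 : M₂.U → M₁.U → Prop)
    (B12 : M₁.U → M₂.U → Prop) (B21 : M₂.U → M₁.U → Prop),
    IsAsimD2 boxOne Θ M₁ M₂ t u A12 A21 B12 B21 →
    ∀ (a : M₁.U) (b : M₂.U), A12 a b → SatAt M₁ a x φ → SatAt M₂ b x φ

/-- φ(x) is κ-invariant with respect to (i,j)-modal asimulations
(`diamOne = true` means j = 1). -/
def KappaInvariant (κ : Set Model) (boxOne diamOne : Bool) (x : ℕ) (φ : FOForm) : Prop :=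
  if diamOne then KappaInvariantD1 κ boxOne x φ else KappaInvariantD2 κ boxOne x φ


/-! ### Proof of the theorem. -/

/-- Direct semantics of modal formulas under the (2,2)-translation. -/
def MSat (M : Model) : MForm → M.U → Prop
  | .bot, _ => False
  | .prop n, a => M.pred n a
  | .conj I J, a => MSat M I a ∧ MSat M J a
  | .disj I J, a => MSat M I a ∨ MSat M J a
  | .impl I J, a => ∀ b, M.rel a b → MSat M I b → MSat M J b
  | .box I, a => ∀ b, M.rel a b → ∀ c, M.relBox b c → MSat M I c
  | .diam I, a => ∀ b, M.rel a b → ∃ c, M.relDiam b c ∧ MSat M I c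

theorem sat_ST (M : Model) (I : MForm) : ∀ (x : ℕ) (α : ℕ → M.U),
    Sat M (ST false false I x) α ↔ MSat M I (α x) := by
  induction I with
  | bot => intro x α; simp [ST, Sat, MSat]
  | prop n => intro x α; simp [ST, Sat, MSat]
  | conj I J hI hJ => intro x α; simp [ST, Sat, MSat, hI, hJ]
  | disj I J hI hJ => intro x α; simp [ST, Sat, MSat, hI, hJ]
  | impl I J hI hJ => intro x α; simp [ST, Sat, MSat, hI, hJ, Model.relOf]
  | box I hI => intro x α; simp [ST, Sat, MSat, hI, Model.relOf]
  | diam I hI => intro x α; simp [ST, Sat, MSat, hI, Model.relOf]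

theorem sat_congr (M : Model) (φ : FOForm) : ∀ (α β : ℕ → M.U),
    (∀ v ∈ φ.freeVars, α v = β v) → (Sat M φ α ↔ Sat M φ β) := by
  induction φ with
  | falsum => intro α β _; simp [Sat]
  | pred n v => intro α β h; simp [Sat, h v (by simp [FOForm.freeVars])]
  | rel s v w =>
    intro α β h
    simp [Sat, h v (by simp [FOForm.freeVars]), h w (by simp [FOForm.freeVars])]
  | conj f g hf hg =>
    intro α β h
    simp only [FOForm.freeVars, Finset.mem_union] at h
    simp only [Sat]
    rw [hf α β fun v hv => h v (Or.inl hv), hg α β fun v hv => h v (Or.inr hv)]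
  | disj f g hf hg =>
    intro α β h
    simp only [FOForm.freeVars, Finset.mem_union] at h
    simp only [Sat]
    rw [hf α β fun v hv => h v (Or.inl hv), hg α β fun v hv => h v (Or.inr hv)]
  | impl f g hf hg =>
    intro α β h
    simp only [FOForm.freeVars, Finset.mem_union] at h
    simp only [Sat]
    rw [hf α β fun v hv => h v (Or.inl hv), hg α β fun v hv => h v (Or.inr hv)]
  | all w f hf =>
    intro α β h
    simp only [FOForm.freeVars, Finset.mem_sdiff, Finset.mem_singleton] at h
    simp only [Sat]
    refine forall_congr' fun u => hf _ _ fun v hv => ?_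
    by_cases hvw : v = w
    · subst hvw; simp
    · simp [hvw, h v ⟨hv, hvw⟩]
  | ex w f hf =>
    intro α β h
    simp only [FOForm.freeVars, Finset.mem_sdiff, Finset.mem_singleton] at h
    simp only [Sat]
    refine exists_congr fun u => hf _ _ fun v hv => ?_
    by_cases hvw : v = w
    · subst hvw; simp
    · simp [hvw, h v ⟨hv, hvw⟩]

theorem satAt_of_sat {M : Model} {φ : FOForm} {x : ℕ} (hfv : φ.freeVars ⊆ {x})
    {α : ℕ → M.U} (h : Sat M φ α) : SatAt M (α x) x φ := by
  intro β hβ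
  refine (sat_congr M φ α β fun v hv => ?_).1 h
  have := hfv hv
  rw [Finset.mem_singleton] at this
  subst this
  exact hβ.symm

/-- Injective coding of modal formulas, for countability. -/
def menc : MForm → ℕ
  | .bot => Nat.pair 0 0
  | .prop n => Nat.pair 1 n
  | .conj I J => Nat.pair 2 (Nat.pair (menc I) (menc J))
  | .disj I J => Nat.pair 3 (Nat.pair (menc I) (menc J))
  | .impl I J => Nat.pair 4 (Nat.pair (menc I) (menc J))
  | .box I => Nat.pair 5 (menc I)
  | .diam I => Nat.pair 6 (menc I)

theorem menc_inj : Function.Injective menc := by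
  intro I
  induction I with
  | bot => intro J h; cases J <;> simp_all [menc, Nat.pair_eq_pair]
  | prop n => intro J h; cases J <;> simp_all [menc, Nat.pair_eq_pair]
  | conj I₁ I₂ h₁ h₂ =>
    intro J h
    cases J <;> simp [menc, Nat.pair_eq_pair] at h
    rw [h₁ h.1, h₂ h.2]
  | disj I₁ I₂ h₁ h₂ =>
    intro J h
    cases J <;> simp [menc, Nat.pair_eq_pair] at h
    rw [h₁ h.1, h₂ h.2]
  | impl I₁ I₂ h₁ h₂ =>
    intro J h
    cases J <;> simp [menc, Nat.pair_eq_pair] at h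
    rw [h₁ h.1, h₂ h.2]
  | box I₁ h₁ =>
    intro J h
    cases J <;> simp [menc, Nat.pair_eq_pair] at h
    rw [h₁ h]
  | diam I₁ h₁ =>
    intro J h
    cases J <;> simp [menc, Nat.pair_eq_pair] at h
    rw [h₁ h]

theorem exists_enum : ∃ e : ℕ → MForm, Function.Surjective e := by
  have : Countable MForm := menc_inj.countable
  have : Nonempty MForm := ⟨.bot⟩
  exact exists_surjective_nat MForm

/-- Conjunction of a list of modal formulas. -/
def bigConj : List MForm → MForm
  | [] => .impl .bot .bot
  | I :: L => .conj I (bigConj L)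

/-- Disjunction of a list of modal formulas. -/
def bigDisj : List MForm → MForm
  | [] => .bot
  | I :: L => .disj I (bigDisj L)

theorem msat_bigConj (M : Model) (a : M.U) (L : List MForm) :
    MSat M (bigConj L) a ↔ ∀ I ∈ L, MSat M I a := by
  induction L with
  | nil => simp [bigConj, MSat]
  | cons I L ih => simp [bigConj, MSat, ih]

theorem msat_bigDisj (M : Model) (a : M.U) (L : List MForm) :
    MSat M (bigDisj L) a ↔ ∃ I ∈ L, MSat M I a := by
  induction L with
  | nil => simp [bigDisj, MSat]
  | cons I L ih => simp [bigDisj, MSat, ih]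

open Classical in
/-- The first `k` formulas in the enumeration that satisfy `p`. -/
noncomputable def firstSat (e : ℕ → MForm) (k : ℕ) (p : MForm → Prop) : List MForm :=
  ((List.range k).map e).filter (fun I => decide (p I))

theorem mem_firstSat (e : ℕ → MForm) (k : ℕ) (p : MForm → Prop) (I : MForm) :
    I ∈ firstSat e k p ↔ (∃ i < k, e i = I) ∧ p I := by
  simp [firstSat]

/-- The fixed nonprincipal ultrafilter. -/
noncomputable abbrev UF : Ultrafilter ℕ := Filter.hyperfilter ℕ

/-- Ultraproduct (without quotienting, as there is no identity). -/
def UProd (M : ℕ → Model) : Model where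
  U := ∀ n, (M n).U
  rel f g := ∀ᶠ n in (UF : Filter ℕ), (M n).rel (f n) (g n)
  relBox f g := ∀ᶠ n in (UF : Filter ℕ), (M n).relBox (f n) (g n)
  relDiam f g := ∀ᶠ n in (UF : Filter ℕ), (M n).relDiam (f n) (g n)
  pred k f := ∀ᶠ n in (UF : Filter ℕ), (M n).pred k (f n)

theorem exists_uf {W : ℕ → Type} (P : ∀ n, W n → Prop) (g : ∀ n, W n) :
    (∃ f : ∀ n, W n, ∀ᶠ n in (UF : Filter ℕ), P n (f n)) ↔
      ∀ᶠ n in (UF : Filter ℕ), ∃ w, P n w := by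
  constructor
  · rintro ⟨f, hf⟩
    exact hf.mono fun n h => ⟨_, h⟩
  · intro h
    have : ∀ n, ∃ w : W n, (∃ w, P n w) → P n w := by
      intro n
      by_cases hn : ∃ w, P n w
      · exact ⟨hn.choose, fun _ => hn.choose_spec⟩
      · exact ⟨g n, fun h => absurd h hn⟩
    choose f hf using this
    exact ⟨f, h.mono fun n hn => hf n hn⟩

theorem update_apply_n {W : ℕ → Type} (α : ℕ → ∀ n, W n) (v : ℕ) (u : ∀ n, W n) (n : ℕ) :
    (fun i => Function.update α v u i n) = Function.update (fun i => α i n) v (u n) := by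
  funext i
  by_cases h : i = v
  · subst h; simp
  · simp [h]

theorem los (M : ℕ → Model) (φ : FOForm) : ∀ α : ℕ → (UProd M).U,
    Sat (UProd M) φ α ↔ ∀ᶠ n in (UF : Filter ℕ), Sat (M n) φ (fun v => α v n) := by
  induction φ with
  | falsum => intro α; simpa [Sat] using UF.neBot.ne
  | pred n v => intro α; simp [Sat, UProd]
  | rel s v w => intro α; cases s <;> simp [Sat, UProd, Model.relOf]
  | conj f g hf hg => intro α; simp only [Sat, hf, hg, Filter.eventually_and]
  | disj f g hf hg => intro α; simp only [Sat, hf, hg, Ultrafilter.eventually_or]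
  | impl f g hf hg => intro α; simp only [Sat, hf, hg, Ultrafilter.eventually_imp]
  | all v f hf =>
    intro α
    simp only [Sat, hf]
    rw [← not_iff_not, ← Ultrafilter.eventually_not]
    simp only [not_forall, ← Ultrafilter.eventually_not]
    rw [← exists_uf (W := fun n => (M n).U)
      (fun n w => ¬ Sat (M n) f (Function.update (fun i => α i n) v w)) (α 0)]
    refine exists_congr fun u => ?_
    exact Filter.eventually_congr (.of_forall fun n => not_congr (iff_of_eq
      (congrArg (Sat (M n) f) (update_apply_n (W := fun n => (M n).U) α v u n))))
  | ex v f hf =>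
    intro α
    simp only [Sat, hf]
    rw [← exists_uf (W := fun n => (M n).U)
      (fun n w => Sat (M n) f (Function.update (fun i => α i n) v w)) (α 0)]
    refine exists_congr fun u => ?_
    exact Filter.eventually_congr (.of_forall fun n => iff_of_eq
      (congrArg (Sat (M n) f) (update_apply_n (W := fun n => (M n).U) α v u n)))

theorem mlos (M : ℕ → Model) (I : MForm) (a : (UProd M).U) :
    MSat (UProd M) I a ↔ ∀ᶠ n in (UF : Filter ℕ), MSat (M n) I (a n) := by
  have := los M (ST false false I 0) (fun _ => a)
  simpa only [sat_ST] using this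

/-- Countable saturation of the ultraproduct. -/
theorem saturation {W : ℕ → Type} (P : ∀ n, W n → Prop) (Q : ℕ → ∀ n, W n → Prop)
    (h : ∀ k : ℕ, ∃ g : ∀ n, W n, (∀ᶠ n in (UF : Filter ℕ), P n (g n)) ∧
      ∀ i < k, ∀ᶠ n in (UF : Filter ℕ), Q i n (g n)) :
    ∃ f : ∀ n, W n, (∀ᶠ n in (UF : Filter ℕ), P n (f n)) ∧
      ∀ i, ∀ᶠ n in (UF : Filter ℕ), Q i n (f n) := by
  classical
  choose g hP hQ using h
  let good : ℕ → ℕ → Prop := fun n k => P n (g k n) ∧ ∀ i < k, Q i n (g k n)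
  have hgood : ∀ k, ∀ᶠ n in (UF : Filter ℕ), good n k := by
    intro k
    refine (hP k).and ?_
    have : ∀ᶠ n in (UF : Filter ℕ), ∀ i ∈ Finset.range k, Q i n (g k n) :=
      (Filter.eventually_all_finset (Finset.range k)).2
        fun i hi => hQ k i (Finset.mem_range.1 hi)
    exact this.mono fun n hn i hi => hn i (Finset.mem_range.2 hi)
  have key : ∀ k, ∀ᶠ n in (UF : Filter ℕ),
      good n (Nat.findGreatest (good n) n) ∧ k ≤ Nat.findGreatest (good n) n := by
    intro k
    have hk : ∀ᶠ n in (UF : Filter ℕ), k ≤ n := by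
      have : ∀ᶠ n in (Filter.cofinite : Filter ℕ), k ≤ n := by
        rw [Nat.cofinite_eq_atTop]; exact Filter.eventually_ge_atTop k
      exact Filter.hyperfilter_le_cofinite this
    filter_upwards [hgood k, hk] with n h1 h2
    exact ⟨Nat.findGreatest_spec h2 h1, Nat.le_findGreatest h2 h1⟩
  refine ⟨fun n => g (Nat.findGreatest (good n) n) n, ?_, fun i => ?_⟩
  · exact (key 0).mono fun n hn => hn.1.1
  · exact (key (i + 1)).mono fun n hn => hn.1.2 i hn.2

/-- Inclusion of types. -/
def RelA (N P : Model) (a : N.U) (b : P.U) : Prop := ∀ I, MSat N I a → MSat P I b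

/-- Inclusion of possibility sets. -/
def RelB (N P : Model) (a : N.U) (b : P.U) : Prop :=
  ∀ I, (∃ z, N.relDiam a z ∧ MSat N I z) → ∃ z, P.relDiam b z ∧ MSat P I z

theorem base_cond (N P : Model) : BaseCondE N P Set.univ (RelA N P) :=
  fun _ _ hab n _ hn => hab (.prop n) hn

theorem step_cond (M : ℕ → Model) (P : Model) :
    StepCondE (UProd M) P (RelA (UProd M) P) (RelA P (UProd M)) := by
  intro a b d hab hbd
  obtain ⟨e, he⟩ := exists_enum
  obtain ⟨c, hc, hQ⟩ := saturation (W := fun n => (M n).U) (fun n w => (M n).rel (a n) w)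
    (fun i n w => MSat P (e i) d ↔ MSat (M n) (e i) w) (by
      intro k
      have hb : ¬ MSat P (.impl (bigConj (firstSat e k fun I => MSat P I d))
          (bigDisj (firstSat e k fun I => ¬ MSat P I d))) b := by
        intro hb
        have := hb d hbd ((msat_bigConj _ _ _).2 fun I hI => ((mem_firstSat _ _ _ _).1 hI).2)
        obtain ⟨I, hI, hd⟩ := (msat_bigDisj _ _ _).1 this
        exact ((mem_firstSat _ _ _ _).1 hI).2 hd
      have ha := mt (hab _) hb
      simp only [MSat, not_forall] at ha
      obtain ⟨c, hac, h1, h2⟩ := ha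
      refine ⟨c, hac, fun i hi => ?_⟩
      by_cases hd : MSat P (e i) d
      · simp only [hd, true_iff]
        exact (mlos M _ _).1 ((msat_bigConj _ _ _).1 h1 _
          ((mem_firstSat _ _ _ _).2 ⟨⟨i, hi, rfl⟩, hd⟩))
      · simp only [hd, false_iff]
        rw [Ultrafilter.eventually_not, ← mlos]
        intro hc
        exact h2 ((msat_bigDisj _ _ _).2
          ⟨_, (mem_firstSat _ _ _ _).2 ⟨⟨i, hi, rfl⟩, hd⟩, hc⟩))
  refine ⟨c, hc, fun I hI => ?_, fun I hI => ?_⟩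
  · obtain ⟨i, rfl⟩ := he I
    obtain ⟨n, h1, h2⟩ := (((mlos M _ _).1 hI).and (hQ i)).exists
    exact h2.2 h1
  · obtain ⟨i, rfl⟩ := he I
    exact (mlos M _ _).2 ((hQ i).mono fun n hn => hn.1 hI)

theorem box_cond (M : ℕ → Model) (P : Model) :
    Box2CondE (UProd M) P (RelA (UProd M) P) := by
  intro a b d f hab hbd hdf
  obtain ⟨e, he⟩ := exists_enum
  obtain ⟨c, hc, hQ⟩ := saturation (W := fun n => (M n).U × (M n).U)
    (fun n w => (M n).rel (a n) w.1 ∧ (M n).relBox w.1 w.2)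
    (fun i n w => MSat (M n) (e i) w.2 → MSat P (e i) f) (by
      intro k
      have hb : ¬ MSat P (.box (bigDisj (firstSat e k fun I => ¬ MSat P I f))) b := by
        intro hb
        obtain ⟨I, hI, hd⟩ := (msat_bigDisj _ _ _).1 (hb d hbd f hdf)
        exact ((mem_firstSat _ _ _ _).1 hI).2 hd
      have ha := mt (hab _) hb
      simp only [MSat, not_forall] at ha
      obtain ⟨c, hac, z, hcz, h2⟩ := ha
      refine ⟨fun n => (c n, z n), Filter.Eventually.and hac hcz, fun i hi => ?_⟩
      by_cases hd : MSat P (e i) f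
      · simp [hd]
      · simp only [hd, imp_false]
        rw [Ultrafilter.eventually_not, ← mlos]
        intro hc
        exact h2 ((msat_bigDisj _ _ _).2
          ⟨_, (mem_firstSat _ _ _ _).2 ⟨⟨i, hi, rfl⟩, hd⟩, hc⟩))
  refine ⟨fun n => (c n).1, fun n => (c n).2, hc.mono fun n hn => hn.1,
    hc.mono fun n hn => hn.2, fun I hI => ?_⟩
  obtain ⟨i, rfl⟩ := he I
  obtain ⟨n, h1, h2⟩ := (((mlos M _ _).1 hI).and (hQ i)).exists
  exact h2 h1

theorem diam_los (M : ℕ → Model) (I : MForm) (a : (UProd M).U) :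
    (∃ z, (UProd M).relDiam a z ∧ MSat (UProd M) I z) ↔
      ∀ᶠ n in (UF : Filter ℕ), ∃ z, (M n).relDiam (a n) z ∧ MSat (M n) I z := by
  rw [← exists_uf (W := fun n => (M n).U)
    (fun n z => (M n).relDiam (a n) z ∧ MSat (M n) I z) a]
  refine exists_congr fun z => ?_
  rw [Filter.eventually_and, mlos]
  rfl

theorem diam_a_cond (M : ℕ → Model) (P : Model) :
    Diam2aCondE (UProd M) P (RelA (UProd M) P) (RelB (UProd M) P) := by
  intro a b d hab hbd
  obtain ⟨e, he⟩ := exists_enum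
  obtain ⟨c, hc, hQ⟩ := saturation (W := fun n => (M n).U)
    (fun n w => (M n).rel (a n) w)
    (fun i n w => (∃ z, (M n).relDiam w z ∧ MSat (M n) (e i) z) →
      ∃ z, P.relDiam d z ∧ MSat P (e i) z) (by
      intro k
      have hb : ¬ MSat P (.diam (bigDisj (firstSat e k
          fun I => ¬ ∃ z, P.relDiam d z ∧ MSat P I z))) b := by
        intro hb
        obtain ⟨z, hz, hz'⟩ := hb d hbd
        obtain ⟨I, hI, hd⟩ := (msat_bigDisj _ _ _).1 hz'
        exact ((mem_firstSat _ _ _ _).1 hI).2 ⟨z, hz, hd⟩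
      have ha := mt (hab _) hb
      rw [MSat] at ha
      simp only [not_forall] at ha
      obtain ⟨c, hac, h2⟩ := ha
      refine ⟨c, hac, fun i hi => ?_⟩
      by_cases hd : ∃ z, P.relDiam d z ∧ MSat P (e i) z
      · exact Filter.Eventually.of_forall fun _ _ => hd
      · have : ∀ᶠ n in (UF : Filter ℕ),
            ¬ ∃ z, (M n).relDiam (c n) z ∧ MSat (M n) (e i) z := by
          rw [Ultrafilter.eventually_not, ← diam_los]
          rintro ⟨z, hz, hz'⟩
          exact h2 ⟨z, hz, (msat_bigDisj _ _ _).2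
            ⟨_, (mem_firstSat _ _ _ _).2 ⟨⟨i, hi, rfl⟩, hd⟩, hz'⟩⟩
        exact this.mono fun n hn h => absurd h hn)
  refine ⟨c, hc, fun I hI => ?_⟩
  obtain ⟨i, rfl⟩ := he I
  obtain ⟨n, h1, h2⟩ := (((diam_los M _ _).1 hI).and (hQ i)).exists
  exact h2 h1

theorem diam_b_cond (N : Model) (M : ℕ → Model) :
    Diam2bCondE N (UProd M) (RelB N (UProd M)) (RelA N (UProd M)) := by
  intro a c b hab hac
  obtain ⟨e, he⟩ := exists_enum
  obtain ⟨d, hd, hQ⟩ := saturation (W := fun n => (M n).U)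
    (fun n w => (M n).relDiam (b n) w)
    (fun i n w => MSat N (e i) c → MSat (M n) (e i) w) (by
      intro k
      obtain ⟨z, hz, hz'⟩ := hab (bigConj (firstSat e k fun I => MSat N I c))
        ⟨c, hac, (msat_bigConj _ _ _).2 fun I hI => ((mem_firstSat _ _ _ _).1 hI).2⟩
      refine ⟨z, hz, fun i hi => ?_⟩
      by_cases hc : MSat N (e i) c
      · have := (mlos M _ _).1 ((msat_bigConj _ _ _).1 hz' _
          ((mem_firstSat _ _ _ _).2 ⟨⟨i, hi, rfl⟩, hc⟩))
        exact this.mono fun n hn _ => hn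
      · exact Filter.Eventually.of_forall fun _ h => absurd h hc)
  refine ⟨d, hd, fun I hI => ?_⟩
  obtain ⟨i, rfl⟩ := he I
  exact (mlos M _ _).2 ((hQ i).mono fun n hn => hn hI)

/-- A formula preserved along inclusion of the truth sets of finitely many modal
formulas is equivalent to a modal formula. -/
theorem finite_case (φ : FOForm) (x : ℕ) (e : ℕ → MForm) (k : ℕ)
    (h : ∀ (M N : Model) (α : ℕ → M.U) (β : ℕ → N.U), Sat M φ α →
      (∀ i < k, MSat M (e i) (α x) → MSat N (e i) (β x)) → Sat N φ β) :
    ∃ I : MForm, Equiv φ (ST false false I x) := by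
  classical
  let good : Finset ℕ → Prop := fun S => ∃ (M : Model) (α : ℕ → M.U), Sat M φ α ∧
    ∀ i < k, MSat M (e i) (α x) → i ∈ S
  let L : List (Finset ℕ) := ((Finset.range k).powerset.filter good).toList
  refine ⟨bigDisj (L.map fun S => bigConj (S.toList.map e)), fun M α => ?_⟩
  rw [sat_ST, msat_bigDisj]
  constructor
  · intro hα
    let S : Finset ℕ := (Finset.range k).filter fun i => MSat M (e i) (α x)
    refine ⟨bigConj (S.toList.map e), List.mem_map.2 ⟨S, ?_, rfl⟩, ?_⟩
    · simp only [L, Finset.mem_toList, Finset.mem_filter, Finset.mem_powerset]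
      exact ⟨Finset.filter_subset _ _, M, α, hα, fun i hi h => by simp [S, hi, h]⟩
    · rw [msat_bigConj]
      intro I hI
      obtain ⟨i, hi, rfl⟩ := List.mem_map.1 hI
      rw [Finset.mem_toList] at hi
      exact (Finset.mem_filter.1 hi).2
  · rintro ⟨I, hI, hsat⟩
    obtain ⟨S, hS, rfl⟩ := List.mem_map.1 hI
    simp only [L, Finset.mem_toList, Finset.mem_filter] at hS
    obtain ⟨N, β, hβ, hN⟩ := hS.2
    rw [msat_bigConj] at hsat
    exact h N M β α hβ fun i hi hm =>
      hsat _ (List.mem_map.2 ⟨i, Finset.mem_toList.2 (hN i hi hm), rfl⟩)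

/-- **Hard direction of Theorem 2, case (2,2).**  If φ(x) is invariant with
respect to (2,2)-modal asimulations, then φ(x) is logically equivalent to a
(2,2)-standard x-translation of a modal intuitionistic formula. -/
theorem statement_15 (φ : FOForm) (x : ℕ) (hfv : φ.freeVars ⊆ {x})
    (h : InvariantD2 false x φ) :
    ∃ I : MForm, Equiv φ (ST false false I x) := by
  by_contra hne
  obtain ⟨e, he⟩ := exists_enum
  have H : ∀ k : ℕ, ∃ (M N : Model) (α : ℕ → M.U) (β : ℕ → N.U), Sat M φ α ∧
      (∀ i < k, MSat M (e i) (α x) → MSat N (e i) (β x)) ∧ ¬ Sat N φ β := by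
    intro k
    by_contra hk
    push Not at hk
    exact hne (finite_case φ x e k hk)
  choose M N α β hα hαβ hβ using H
  let a : ℕ → (UProd M).U := fun v n => α n v
  let b : ℕ → (UProd N).U := fun v n => β n v
  have hA : RelA (UProd M) (UProd N) (a x) (b x) := by
    intro I hI
    obtain ⟨i, rfl⟩ := he I
    rw [mlos] at hI ⊢
    have hk : ∀ᶠ n in (UF : Filter ℕ), i + 1 ≤ n := by
      have : ∀ᶠ n in (Filter.cofinite : Filter ℕ), i + 1 ≤ n := by
        rw [Nat.cofinite_eq_atTop]; exact Filter.eventually_ge_atTop (i + 1)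
      exact Filter.hyperfilter_le_cofinite this
    filter_upwards [hI, hk] with n h1 h2
    exact hαβ n i h2 h1
  have ha : Sat (UProd M) φ a := (los M φ a).2 (Filter.Eventually.of_forall hα)
  have hb : ¬ Sat (UProd N) φ b := by
    rw [los, ← Ultrafilter.eventually_not]
    exact Filter.Eventually.of_forall hβ
  refine hb (h Set.univ (Set.subset_univ _) (UProd M) (UProd N) (a x) (b x)
    (RelA _ _) (RelA _ _) (RelB _ _) (RelB _ _) ?_ (a x) (b x) hA (satAt_of_sat hfv ha) b rfl)
  refine ⟨hA, base_cond _ _, base_cond _ _, step_cond _ _, step_cond _ _, ?_,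
    diam_a_cond _ _, diam_a_cond _ _, diam_b_cond _ _, diam_b_cond _ _⟩
  exact ⟨box_cond _ _, box_cond _ _⟩

end ModalIntAsim
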